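/- (Simplest case with best constant.) Let $p > 1$, $1/p+1/q = 1$, $\rho > \max\{0,-\alpha\}$, $0 < \gamma < \sigma \le 1$, and $f, a_n \ge 0$ with $0 < \int_0^{\infty} x^{p(1-\sigma)-1}f^p(x)dx < \infty$ and $0 < \sum_{n\ge1} n^{q(1-\sigma)-1}a_n^q < \infty$. Then $\sum_{n=1}^{\infty}\int_0^{\infty} \frac{\operatorname{csch}(\rho (xn)^{\gamma})}{e^{\alpha (xn)^{\gamma}}} a_n f(x)\,dx < k(\sigma)\left[\int_0^{\infty} x^{p(1-\sigma)-1}f^p(x)\,dx\right]^{1/p}\left[\sum_{n=1}^{\infty} n^{q(1-\sigma)-1}a_n^q\right]^{1/q}$, where $k(\sigma) = \frac{2\Gamma(\sigma/\gamma)}{\gamma(2\rho)^{\sigma/\gamma}}\zeta(\frac{\sigma}{\gamma},\frac{\alpha+\rho}{2\rho})$ is the best possible constant. -/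

import Mathlib

/-- The hyperbolic cosecant function. -/
noncomputable def csch (u : ℝ) : ℝ := 2 / (Real.exp u - Real.exp (-u))

/-- The Hurwitz zeta function (real, as a series), for Re s > 1, a > 0. -/
noncomputable def hurwitzZetaReal (s a : ℝ) : ℝ := ∑' k : ℕ, ((k : ℝ) + a) ^ (-s)

/-!
Hölder's inequality with the weights `x^(σ-1)` and `n^(σ-1)` (the Schur test) bounds the form by the
two weight functions of the kernel `H(xn)`. Dilation invariance makes the continuous one exactly
`∫₀^∞ H(xn) x^(σ-1) dx = n^(-σ) k` with `k = ∫₀^∞ u^(σ-1) H(u) du`, while `∑ₙ H(xn) n^(σ-1)` is a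
lower Riemann sum of a strictly decreasing function and hence strictly below `x^(-σ) k`. Hölder's
inequality would be an equality for the non-integrable pair `x^(σ-1)`, `n^(σ-1)`; truncating it and
perturbing its exponents by `ε` gives test data for which Fatou's lemma recovers `k` as `ε → 0`. For
the hyperbolic cosecant, `k` is computed by expanding the kernel into a geometric series of
exponentials, each of which contributes a Gamma integral and one term of the Hurwitz zeta function.
-/

open MeasureTheory Set Filter Topology
open scoped ENNReal

section SchurTest

variable {ι X : Type*} [MeasurableSpace X] {μ : Measure X} {p q : ℝ}

lemma one_div_add_one_div_eq_one (hpq : p.HolderConjugate q) : 1 / p + 1 / q = 1 := by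
  simpa only [one_div] using hpq.inv_add_inv_eq_one

theorem tsum_lintegral_mul_le_Lp_mul_Lq (hpq : p.HolderConjugate q) {F G : ι → X → ℝ≥0∞}
    (hF : ∀ i, AEMeasurable (F i) μ) (hG : ∀ i, AEMeasurable (G i) μ) :
    ∑' i, ∫⁻ x, F i x * G i x ∂μ ≤
      (∑' i, ∫⁻ x, F i x ^ p ∂μ) ^ (1 / p) * (∑' i, ∫⁻ x, G i x ^ q ∂μ) ^ (1 / q) := by
  let : MeasurableSpace ι := ⊤
  have hsum := ENNReal.lintegral_mul_le_Lp_mul_Lq (Measure.count : Measure ι) hpq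
    (f := fun i ↦ (∫⁻ x, F i x ^ p ∂μ) ^ (1 / p)) (g := fun i ↦ (∫⁻ x, G i x ^ q ∂μ) ^ (1 / q))
    measurable_from_top.aemeasurable measurable_from_top.aemeasurable
  simp only [lintegral_count, Pi.mul_apply, ← ENNReal.rpow_mul, one_div_mul_cancel hpq.pos.ne',
    one_div_mul_cancel hpq.symm.pos.ne', ENNReal.rpow_one] at hsum
  exact (ENNReal.tsum_le_tsum fun i ↦
    ENNReal.lintegral_mul_le_Lp_mul_Lq μ hpq (hF i) (hG i)).trans hsum

lemma rpow_mul_rpow_mul_rpow_neg_mul_rpow (hpq : p.HolderConjugate q) (K u v b : ℝ≥0∞) :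
    (K ^ (1 / p) * v ^ (1 / p) * (u ^ (-(1 / q)) * b)) ^ p = K * v * (u ^ (1 - p) * b ^ p) := by
  have hexp : -(1 / q) * p = 1 - p := by
    linear_combination p * one_div_add_one_div_eq_one hpq * (-1) + mul_one_div_cancel hpq.ne_zero
  simp only [ENNReal.mul_rpow_of_nonneg _ _ hpq.nonneg, ← ENNReal.rpow_mul,
    one_div_mul_cancel hpq.ne_zero, ENNReal.rpow_one, hexp]

lemma mul_eq_weighted_mul_weighted (hpq : p.HolderConjugate q) (K a b : ℝ≥0∞) {u v : ℝ≥0∞}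
    (hu₀ : u ≠ 0) (hu_top : u ≠ ∞) (hv₀ : v ≠ 0) (hv_top : v ≠ ∞) :
    K ^ (1 / p) * v ^ (1 / p) * (u ^ (-(1 / q)) * b) *
      (K ^ (1 / q) * u ^ (1 / q) * (v ^ (-(1 / p)) * a)) = K * (a * b) := by
  have hp := hpq.pos
  have hq := hpq.symm.pos
  have hK : K ^ (1 / p) * K ^ (1 / q) = K := by
    rw [← ENNReal.rpow_add_of_nonneg _ _ (by positivity) (by positivity),
      one_div_add_one_div_eq_one hpq, ENNReal.rpow_one]
  have hv : v ^ (1 / p) * v ^ (-(1 / p)) = 1 := by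
    rw [← ENNReal.rpow_add _ _ hv₀ hv_top, add_neg_cancel, ENNReal.rpow_zero]
  have hu : u ^ (1 / q) * u ^ (-(1 / q)) = 1 := by
    rw [← ENNReal.rpow_add _ _ hu₀ hu_top, add_neg_cancel, ENNReal.rpow_zero]
  calc _ = K ^ (1 / p) * K ^ (1 / q) * (v ^ (1 / p) * v ^ (-(1 / p))) *
            (u ^ (1 / q) * u ^ (-(1 / q))) * (a * b) := by ring
    _ = K * (a * b) := by rw [hK, hv, hu, mul_one, mul_one]

theorem tsum_lintegral_mul_le_of_weights [Countable ι] (hpq : p.HolderConjugate q)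
    {K : ι → X → ℝ≥0∞} {u f : X → ℝ≥0∞} {v : ι → ℝ≥0∞} (a : ι → ℝ≥0∞)
    (hK : ∀ i, AEMeasurable (K i) μ) (hu : AEMeasurable u μ) (hf : AEMeasurable f μ)
    (hu₀ : ∀ᵐ x ∂μ, u x ≠ 0) (hu_top : ∀ᵐ x ∂μ, u x ≠ ∞) (hv₀ : ∀ i, v i ≠ 0)
    (hv_top : ∀ i, v i ≠ ∞) :
    ∑' i, ∫⁻ x, K i x * (a i * f x) ∂μ ≤
      (∫⁻ x, (∑' i, K i x * v i) * (u x ^ (1 - p) * f x ^ p) ∂μ) ^ (1 / p) *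
        (∑' i, (∫⁻ x, K i x * u x ∂μ) * (v i ^ (1 - q) * a i ^ q)) ^ (1 / q) := by
  let F : ι → X → ℝ≥0∞ := fun i x ↦ K i x ^ (1 / p) * v i ^ (1 / p) * (u x ^ (-(1 / q)) * f x)
  let G : ι → X → ℝ≥0∞ := fun i x ↦ K i x ^ (1 / q) * u x ^ (1 / q) * (v i ^ (-(1 / p)) * a i)
  have hFG (i : ι) : ∫⁻ x, K i x * (a i * f x) ∂μ = ∫⁻ x, F i x * G i x ∂μ := by
    refine lintegral_congr_ae ?_
    filter_upwards [hu₀, hu_top] with x hx₀ hx_top using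
      (mul_eq_weighted_mul_weighted hpq (K i x) (a i) (f x) hx₀ hx_top (hv₀ i) (hv_top i)).symm
  calc ∑' i, ∫⁻ x, K i x * (a i * f x) ∂μ
      = ∑' i, ∫⁻ x, F i x * G i x ∂μ := by simp only [hFG]
    _ ≤ (∑' i, ∫⁻ x, F i x ^ p ∂μ) ^ (1 / p) * (∑' i, ∫⁻ x, G i x ^ q ∂μ) ^ (1 / q) :=
      tsum_lintegral_mul_le_Lp_mul_Lq hpq (fun i ↦ by fun_prop) (fun i ↦ by fun_prop)
    _ = _ := by
      simp only [F, G, rpow_mul_rpow_mul_rpow_neg_mul_rpow hpq,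
        rpow_mul_rpow_mul_rpow_neg_mul_rpow hpq.symm]
      rw [← lintegral_tsum fun i ↦ by fun_prop]
      simp only [ENNReal.tsum_mul_right]
      congr! 4 with i
      exact lintegral_mul_const'' _ (by fun_prop)

end SchurTest

section Lintegral

variable {X : Type*} [MeasurableSpace X] {μ : Measure X}

lemma lintegral_mul_lt_lintegral_mul {w W h : X → ℝ≥0∞} (hWh : AEMeasurable (fun x ↦ W x * h x) μ)
    (hlt : ∀ᵐ x ∂μ, w x < W x) (h₀ : ∫⁻ x, W x * h x ∂μ ≠ 0) (h_top : ∫⁻ x, W x * h x ∂μ ≠ ∞) :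
    ∫⁻ x, w x * h x ∂μ < ∫⁻ x, W x * h x ∂μ := by
  have hle : ∀ᵐ x ∂μ, w x * h x ≤ W x * h x := hlt.mono fun x hx ↦ by gcongr
  refine lintegral_strict_mono_of_ae_le_of_frequently_ae_lt hWh
    (ne_top_of_le_ne_top h_top (lintegral_mono_ae hle)) hle fun hnot ↦ h₀ ?_
  refine (lintegral_congr_ae ?_).trans lintegral_zero
  filter_upwards [hnot, hlt, ae_lt_top' hWh h_top] with x hx hwx hfin
  by_contra hne
  have hh_top : h x ≠ ∞ := fun hh ↦ by simp [hh, (pos_of_gt hwx).ne'] at hfin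
  exact hx (ENNReal.mul_lt_mul_left (right_ne_zero_of_mul hne) hh_top hwx).ne

lemma ofReal_mul_lintegral_Ioi_comp_mul_left {c : ℝ} (hc : 0 < c) (g : ℝ → ℝ≥0∞) :
    ENNReal.ofReal c * ∫⁻ x in Ioi (0 : ℝ), g (c * x) = ∫⁻ x in Ioi (0 : ℝ), g x := by
  have himage : (c * ·) '' Ioi (0 : ℝ) = Ioi 0 := by simpa using image_mul_left_Ioi hc 0
  have hsubst := lintegral_image_eq_lintegral_abs_deriv_mul (s := Ioi (0 : ℝ)) (f := (c * ·))
    (f' := fun _ ↦ c) measurableSet_Ioi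
    (fun x _ ↦ by simpa using ((hasDerivAt_id x).const_mul c).hasDerivWithinAt)
    (mul_right_injective₀ hc.ne').injOn g
  rw [himage, abs_of_pos hc, lintegral_const_mul' _ _ ENNReal.ofReal_ne_top] at hsubst
  exact hsubst.symm

lemma lintegral_Ioi_eq_tsum_lintegral_Ioo (g : ℝ → ℝ≥0∞) :
    ∫⁻ x in Ioi (0 : ℝ), g x = ∑' n : ℕ, ∫⁻ x in Ioo (n : ℝ) (n + 1), g x := by
  have hunion : ⋃ n : ℕ, Ioc (n : ℝ) (n + 1) = Ioi 0 := by
    simpa using iUnion_Ioc_map_succ_eq_Ioi (f := fun n : ℕ ↦ (n : ℝ)) (fun _ ↦ by simp)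
      (not_bddAbove_iff.2 fun x ↦ by simpa using exists_nat_gt x)
  have hdisj : Pairwise (Function.onFun Disjoint fun n : ℕ ↦ Ioc (n : ℝ) (n + 1)) := by
    simpa using (Nat.mono_cast (α := ℝ)).pairwise_disjoint_on_Ioc_succ
  simp only [← hunion, lintegral_iUnion (fun _ ↦ measurableSet_Ioc) hdisj,
    restrict_Ioo_eq_restrict_Ioc]

lemma tsum_lt_lintegral_Ioi_of_strictAntiOn {g : ℝ → ℝ≥0∞} (hg : StrictAntiOn g (Ioi 0))
    (hg_top : ∫⁻ x in Ioi (0 : ℝ), g x ≠ ∞) :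
    ∑' n : ℕ, g (n + 1) < ∫⁻ x in Ioi (0 : ℝ), g x := by
  have hlt (n : ℕ) : g (n + 1) < ∫⁻ x in Ioo (n : ℝ) (n + 1), g x := by
    have hend : 0 < (n : ℝ) + 1 := n.cast_add_one_pos
    have hsub : Ioo (n : ℝ) (n + 1) ⊆ Ioi 0 := fun x hx ↦ n.cast_nonneg.trans_lt hx.1
    have hfin : g (n + 1) ≠ ∞ := (hg (half_pos hend) hend (half_lt_self hend)).ne_top
    have hconst : ∫⁻ _ in Ioo (n : ℝ) (n + 1), g (n + 1) = g (n + 1) := by simp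
    refine hconst.symm.trans_lt (lintegral_strict_mono (by simp)
      (aemeasurable_restrict_of_antitoneOn measurableSet_Ioo (hg.antitoneOn.mono hsub))
      (hconst.trans_ne hfin) ?_)
    filter_upwards [ae_restrict_mem measurableSet_Ioo] with x hx using hg (hsub hx) hend hx.2
  rw [lintegral_Ioi_eq_tsum_lintegral_Ioo] at hg_top ⊢
  exact ENNReal.tsum_lt_tsum (i := 0)
    (ne_top_of_le_ne_top hg_top (ENNReal.tsum_le_tsum fun n ↦ (hlt n).le)) (fun n ↦ (hlt n).le)
    (hlt 0)

end Lintegral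

section DilationKernel

/-- The Mellin transform `∫₀^∞ u^(s-1) φ(u) du` of a nonnegative function at a real point, as a
Lebesgue integral; it is the constant of the half-discrete inequality with kernel `φ (x n)`. -/
noncomputable def lmellin (φ : ℝ → ℝ≥0∞) (s : ℝ) : ℝ≥0∞ :=
  ∫⁻ u in Ioi (0 : ℝ), ENNReal.ofReal u ^ (s - 1) * φ u

/-- The half-discrete bilinear form `∑ₙ ∫₀^∞ φ(x n) aₙ f(x) dx` of a dilation kernel. Sequences are
indexed from `0`, so `a n` stands for `aₙ₊₁`. -/
noncomputable def halfDiscreteForm (φ : ℝ → ℝ≥0∞) (f : ℝ → ℝ≥0∞) (a : ℕ → ℝ≥0∞) : ℝ≥0∞ :=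
  ∑' n : ℕ, ∫⁻ x in Ioi (0 : ℝ), φ (x * (n + 1)) * (a n * f x)

variable {φ : ℝ → ℝ≥0∞} {σ p q : ℝ}

lemma ofReal_rpow_add {x : ℝ} (hx : 0 < x) (r s : ℝ) :
    ENNReal.ofReal x ^ (r + s) = ENNReal.ofReal x ^ r * ENNReal.ofReal x ^ s :=
  ENNReal.rpow_add _ _ (ENNReal.ofReal_pos.2 hx).ne' ENNReal.ofReal_ne_top

lemma ofReal_rpow_ne_zero {x : ℝ} (hx : 0 < x) (r : ℝ) : ENNReal.ofReal x ^ r ≠ 0 :=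
  (ENNReal.rpow_pos (ENNReal.ofReal_pos.2 hx) ENNReal.ofReal_ne_top).ne'

lemma ofReal_rpow_ne_top {x : ℝ} (hx : 0 < x) (r : ℝ) : ENNReal.ofReal x ^ r ≠ ∞ :=
  ENNReal.rpow_ne_top_of_ne_zero (ENNReal.ofReal_pos.2 hx).ne' ENNReal.ofReal_ne_top

lemma ofReal_rpow_mul_comp_mul_left {c : ℝ} (hc : 0 < c) (φ : ℝ → ℝ≥0∞) (s u : ℝ) :
    ENNReal.ofReal u ^ (s - 1) * φ (c * u) = ENNReal.ofReal c ^ (1 - s) *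
      (ENNReal.ofReal (c * u) ^ (s - 1) * φ (c * u)) := by
  have hcc : ENNReal.ofReal c ^ (1 - s) * ENNReal.ofReal c ^ (s - 1) = 1 := by
    rw [← ofReal_rpow_add hc, sub_add_sub_cancel, sub_self, ENNReal.rpow_zero]
  rw [ENNReal.ofReal_mul hc.le, ENNReal.mul_rpow_of_ne_top ENNReal.ofReal_ne_top
    ENNReal.ofReal_ne_top, ← mul_assoc, ← mul_assoc, hcc, one_mul]

lemma lmellin_comp_mul_left {c : ℝ} (hc : 0 < c) (φ : ℝ → ℝ≥0∞) (s : ℝ) :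
    lmellin (fun u ↦ φ (c * u)) s = ENNReal.ofReal c ^ (-s) * lmellin φ s := by
  have hpow : ENNReal.ofReal c ^ (1 - s) = ENNReal.ofReal c ^ (-s) * ENNReal.ofReal c := by
    rw [sub_eq_neg_add, ofReal_rpow_add hc, ENNReal.rpow_one]
  simp only [lmellin, ofReal_rpow_mul_comp_mul_left hc]
  rw [lintegral_const_mul' _ _ (ofReal_rpow_ne_top hc _), hpow, mul_assoc,
    ofReal_mul_lintegral_Ioi_comp_mul_left hc fun u ↦ ENNReal.ofReal u ^ (s - 1) * φ u]

lemma strictAntiOn_rpow_mul_comp_mul_left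
    (hφ : StrictAntiOn (fun u ↦ ENNReal.ofReal u ^ (σ - 1) * φ u) (Ioi 0)) {c : ℝ} (hc : 0 < c) :
    StrictAntiOn (fun u ↦ ENNReal.ofReal u ^ (σ - 1) * φ (c * u)) (Ioi 0) := by
  intro u hu v hv huv
  simp only [ofReal_rpow_mul_comp_mul_left hc]
  exact ENNReal.mul_lt_mul_right (ofReal_rpow_ne_zero hc _) (ofReal_rpow_ne_top hc _)
    (hφ (mul_pos hc hu) (mul_pos hc hv) (by gcongr))

lemma aemeasurable_comp_mul_left
    (hφ : StrictAntiOn (fun u ↦ ENNReal.ofReal u ^ (σ - 1) * φ u) (Ioi 0)) {c : ℝ} (hc : 0 < c) :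
    AEMeasurable (fun u ↦ φ (c * u)) (volume.restrict (Ioi 0)) := by
  have hmul : AEMeasurable (fun u ↦ ENNReal.ofReal u ^ (1 - σ) *
      (ENNReal.ofReal u ^ (σ - 1) * φ (c * u))) (volume.restrict (Ioi 0)) :=
    AEMeasurable.mul (by fun_prop) (aemeasurable_restrict_of_antitoneOn measurableSet_Ioi
      (strictAntiOn_rpow_mul_comp_mul_left hφ hc).antitoneOn)
  refine hmul.congr ?_
  filter_upwards [ae_restrict_mem measurableSet_Ioi] with u hu
  rw [← mul_assoc, ← ofReal_rpow_add hu, sub_add_sub_cancel, sub_self, ENNReal.rpow_zero, one_mul]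

lemma tsum_comp_mul_left_lt_lmellin
    (hφ : StrictAntiOn (fun u ↦ ENNReal.ofReal u ^ (σ - 1) * φ u) (Ioi 0))
    (hφ_top : lmellin φ σ ≠ ∞) {c : ℝ} (hc : 0 < c) :
    ∑' n : ℕ, φ (c * (n + 1)) * ENNReal.ofReal (n + 1) ^ (σ - 1) <
      ENNReal.ofReal c ^ (-σ) * lmellin φ σ := by
  have hfin := ENNReal.mul_ne_top (ofReal_rpow_ne_top hc (-σ)) hφ_top
  rw [← lmellin_comp_mul_left hc] at hfin ⊢
  simp only [mul_comm (φ _)]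
  exact tsum_lt_lintegral_Ioi_of_strictAntiOn (strictAntiOn_rpow_mul_comp_mul_left hφ hc) hfin

lemma lmellin_ne_zero (hφ : StrictAntiOn (fun u ↦ ENNReal.ofReal u ^ (σ - 1) * φ u) (Ioi 0))
    (hφ_top : lmellin φ σ ≠ ∞) : lmellin φ σ ≠ 0 := by
  simpa using (pos_of_gt (tsum_comp_mul_left_lt_lmellin hφ hφ_top one_pos)).ne'

lemma ofReal_rpow_mul_weight_rpow {x : ℝ} (hx : 0 < x) (k b : ℝ≥0∞) (r : ℝ) :
    ENNReal.ofReal x ^ (-σ) * k * ((ENNReal.ofReal x ^ (σ - 1)) ^ (1 - r) * b) =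
      k * (ENNReal.ofReal x ^ (r * (1 - σ) - 1) * b) := by
  have hexp : r * (1 - σ) - 1 = -σ + (σ - 1) * (1 - r) := by ring
  rw [← ENNReal.rpow_mul, hexp, ofReal_rpow_add hx]
  ring

lemma lintegral_tsum_comp_mul_weight_lt
    (hφ : StrictAntiOn (fun u ↦ ENNReal.ofReal u ^ (σ - 1) * φ u) (Ioi 0))
    (hφ_top : lmellin φ σ ≠ ∞) {f : ℝ → ℝ≥0∞} (hf : AEMeasurable f (volume.restrict (Ioi 0)))
    (hf₀ : ∫⁻ x in Ioi (0 : ℝ), ENNReal.ofReal x ^ (p * (1 - σ) - 1) * f x ^ p ≠ 0)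
    (hf_top : ∫⁻ x in Ioi (0 : ℝ), ENNReal.ofReal x ^ (p * (1 - σ) - 1) * f x ^ p ≠ ∞) :
    ∫⁻ x in Ioi (0 : ℝ), (∑' n : ℕ, φ (x * (n + 1)) * ENNReal.ofReal (n + 1) ^ (σ - 1)) *
        ((ENNReal.ofReal x ^ (σ - 1)) ^ (1 - p) * f x ^ p) <
      lmellin φ σ * ∫⁻ x in Ioi (0 : ℝ), ENNReal.ofReal x ^ (p * (1 - σ) - 1) * f x ^ p := by
  have hbound : ∫⁻ x in Ioi (0 : ℝ), ENNReal.ofReal x ^ (-σ) * lmellin φ σ *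
      ((ENNReal.ofReal x ^ (σ - 1)) ^ (1 - p) * f x ^ p) =
      lmellin φ σ * ∫⁻ x in Ioi (0 : ℝ), ENNReal.ofReal x ^ (p * (1 - σ) - 1) * f x ^ p := by
    rw [setLIntegral_congr_fun measurableSet_Ioi fun x hx ↦
      ofReal_rpow_mul_weight_rpow (mem_Ioi.1 hx) _ (f x ^ p) p, lintegral_const_mul' _ _ hφ_top]
  rw [← hbound]
  refine lintegral_mul_lt_lintegral_mul (by fun_prop) ?_
    (hbound.trans_ne (mul_ne_zero (lmellin_ne_zero hφ hφ_top) hf₀))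
    (hbound.trans_ne (ENNReal.mul_ne_top hφ_top hf_top))
  filter_upwards [ae_restrict_mem measurableSet_Ioi] with x hx using
    tsum_comp_mul_left_lt_lmellin hφ hφ_top hx

lemma tsum_lintegral_comp_mul_weight (φ : ℝ → ℝ≥0∞) (a : ℕ → ℝ≥0∞) (σ q : ℝ) :
    ∑' n : ℕ, (∫⁻ x in Ioi (0 : ℝ), φ (x * (n + 1)) * ENNReal.ofReal x ^ (σ - 1)) *
        ((ENNReal.ofReal (n + 1) ^ (σ - 1)) ^ (1 - q) * a n ^ q) =
      lmellin φ σ * ∑' n : ℕ, ENNReal.ofReal (n + 1) ^ (q * (1 - σ) - 1) * a n ^ q := by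
  rw [← ENNReal.tsum_mul_left]
  refine tsum_congr fun n ↦ ?_
  have hn : 0 < (n : ℝ) + 1 := n.cast_add_one_pos
  rw [← ofReal_rpow_mul_weight_rpow hn, ← lmellin_comp_mul_left hn, lmellin]
  simp only [mul_comm (φ _), mul_comm _ ((n : ℝ) + 1)]

theorem halfDiscreteForm_lt (hpq : p.HolderConjugate q)
    (hφ : StrictAntiOn (fun u ↦ ENNReal.ofReal u ^ (σ - 1) * φ u) (Ioi 0))
    (hφ_top : lmellin φ σ ≠ ∞) {f : ℝ → ℝ≥0∞} {a : ℕ → ℝ≥0∞}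
    (hf : AEMeasurable f (volume.restrict (Ioi 0)))
    (hf₀ : ∫⁻ x in Ioi (0 : ℝ), ENNReal.ofReal x ^ (p * (1 - σ) - 1) * f x ^ p ≠ 0)
    (hf_top : ∫⁻ x in Ioi (0 : ℝ), ENNReal.ofReal x ^ (p * (1 - σ) - 1) * f x ^ p ≠ ∞)
    (ha₀ : ∑' n : ℕ, ENNReal.ofReal (n + 1) ^ (q * (1 - σ) - 1) * a n ^ q ≠ 0)
    (ha_top : ∑' n : ℕ, ENNReal.ofReal (n + 1) ^ (q * (1 - σ) - 1) * a n ^ q ≠ ∞) :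
    halfDiscreteForm φ f a < lmellin φ σ *
      ((∫⁻ x in Ioi (0 : ℝ), ENNReal.ofReal x ^ (p * (1 - σ) - 1) * f x ^ p) ^ (1 / p) *
        (∑' n : ℕ, ENNReal.ofReal (n + 1) ^ (q * (1 - σ) - 1) * a n ^ q) ^ (1 / q)) := by
  have hp := hpq.pos
  have hq := hpq.symm.pos
  have hφ₀ := lmellin_ne_zero hφ hφ_top
  have hleft := lintegral_tsum_comp_mul_weight_lt hφ hφ_top hf hf₀ hf_top
  set A := ∫⁻ x in Ioi (0 : ℝ), ENNReal.ofReal x ^ (p * (1 - σ) - 1) * f x ^ p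
  set B := ∑' n : ℕ, ENNReal.ofReal (n + 1) ^ (q * (1 - σ) - 1) * a n ^ q with hB
  calc halfDiscreteForm φ f a
      ≤ _ := tsum_lintegral_mul_le_of_weights hpq a (u := fun x ↦ ENNReal.ofReal x ^ (σ - 1))
        (v := fun n : ℕ ↦ ENNReal.ofReal (n + 1) ^ (σ - 1))
        (fun n ↦ by simpa only [mul_comm] using
          aemeasurable_comp_mul_left hφ (c := (n : ℝ) + 1) n.cast_add_one_pos)
        (by fun_prop) hf
        ((ae_restrict_mem measurableSet_Ioi).mono fun x hx ↦ ofReal_rpow_ne_zero hx _)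
        ((ae_restrict_mem measurableSet_Ioi).mono fun x hx ↦ ofReal_rpow_ne_top hx _)
        (fun n ↦ ofReal_rpow_ne_zero n.cast_add_one_pos _)
        (fun n ↦ ofReal_rpow_ne_top n.cast_add_one_pos _)
    _ < (lmellin φ σ * A) ^ (1 / p) * (lmellin φ σ * B) ^ (1 / q) := by
      rw [tsum_lintegral_comp_mul_weight, ← hB]
      exact ENNReal.mul_lt_mul_left (by simp [hφ₀, ha₀, hq.le])
        (by simp [hφ_top, ha_top, ENNReal.mul_eq_top, hq.le])
        (ENNReal.rpow_lt_rpow hleft (by positivity))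
    _ = lmellin φ σ * (A ^ (1 / p) * B ^ (1 / q)) := by
      have hsplit : lmellin φ σ ^ (1 / p) * lmellin φ σ ^ (1 / q) = lmellin φ σ := by
        rw [← ENNReal.rpow_add _ _ hφ₀ hφ_top, one_div_add_one_div_eq_one hpq, ENNReal.rpow_one]
      rw [ENNReal.mul_rpow_of_nonneg _ _ (by positivity),
        ENNReal.mul_rpow_of_nonneg _ _ (by positivity), mul_mul_mul_comm, hsplit]

end DilationKernel

section HilbertBound

/-- The half-discrete Hilbert-type form `∑ₙ ∫₀^∞ H(x n) aₙ f(x) dx`, with `n = 1, 2, …`. -/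
noncomputable def halfDiscreteSum (H f : ℝ → ℝ) (a : ℕ → ℝ) : ℝ :=
  ∑' n : ℕ, ∫ x in Ioi (0 : ℝ), H (x * ((n : ℝ) + 1)) * (a (n + 1) * f x)

/-- The `p`-th power `∫₀^∞ x^(p(1-σ)-1) f(x)^p dx` of the weighted norm of `f`. -/
noncomputable def weightedIntegral (σ p : ℝ) (f : ℝ → ℝ) : ℝ :=
  ∫ x in Ioi (0 : ℝ), x ^ (p * (1 - σ) - 1) * f x ^ p

/-- The `q`-th power `∑ₙ n^(q(1-σ)-1) aₙ^q`, `n = 1, 2, …`, of the weighted norm of `a`. -/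
noncomputable def weightedSum (σ q : ℝ) (a : ℕ → ℝ) : ℝ :=
  ∑' n : ℕ, ((n : ℝ) + 1) ^ (q * (1 - σ) - 1) * a (n + 1) ^ q

/-- The pairs `(f, a)` to which the half-discrete inequality applies: nonnegative, of finite and
positive weighted norms. Finiteness is integrability and summability, so that neither norm is a junk
value. -/
structure IsAdmissible (σ p q : ℝ) (f : ℝ → ℝ) (a : ℕ → ℝ) : Prop where
  fun_nonneg : ∀ x, 0 ≤ f x
  seq_nonneg : ∀ n, 0 ≤ a n
  weightedIntegral_pos : 0 < weightedIntegral σ p f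
  integrableOn : IntegrableOn (fun x ↦ x ^ (p * (1 - σ) - 1) * f x ^ p) (Ioi 0)
  weightedSum_pos : 0 < weightedSum σ q a
  summable : Summable fun n : ℕ ↦ ((n : ℝ) + 1) ^ (q * (1 - σ) - 1) * a (n + 1) ^ q

/-- `C` is a constant for which the strict half-discrete inequality with kernel `H (x n)` holds. -/
def IsHalfDiscreteHilbertBound (H : ℝ → ℝ) (σ p q C : ℝ) : Prop :=
  ∀ (f : ℝ → ℝ) (a : ℕ → ℝ), IsAdmissible σ p q f a → halfDiscreteSum H f a <
    C * (weightedIntegral σ p f ^ (1 / p) * weightedSum σ q a ^ (1 / q))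

/-- Kernels `H` on `(0, ∞)` for which `u ^ (σ-1) H u` is nonnegative, strictly decreasing and
integrable. -/
structure IsHilbertKernel (H : ℝ → ℝ) (σ : ℝ) : Prop where
  nonneg : ∀ u, 0 < u → 0 ≤ H u
  strictAntiOn : StrictAntiOn (fun u ↦ u ^ (σ - 1) * H u) (Ioi 0)
  integrableOn : IntegrableOn (fun u ↦ u ^ (σ - 1) * H u) (Ioi 0)

variable {H f : ℝ → ℝ} {a : ℕ → ℝ} {σ p q : ℝ}

lemma ofReal_rpow_mul_ofReal {x : ℝ} (hx : 0 < x) (r y : ℝ) :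
    ENNReal.ofReal x ^ r * ENNReal.ofReal y = ENNReal.ofReal (x ^ r * y) := by
  rw [ENNReal.ofReal_rpow_of_pos hx, ENNReal.ofReal_mul (by positivity)]

lemma ofReal_rpow_mul_ofReal_rpow {x y : ℝ} (hx : 0 < x) (hy : 0 ≤ y) (hp : 0 ≤ p) (r : ℝ) :
    ENNReal.ofReal x ^ r * ENNReal.ofReal y ^ p = ENNReal.ofReal (x ^ r * y ^ p) := by
  rw [ENNReal.ofReal_rpow_of_nonneg hy hp, ofReal_rpow_mul_ofReal hx]

namespace IsAdmissible

lemma ofReal_weightedIntegral (h : IsAdmissible σ p q f a) (hp : 0 ≤ p) :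
    ENNReal.ofReal (weightedIntegral σ p f) =
      ∫⁻ x in Ioi (0 : ℝ), ENNReal.ofReal x ^ (p * (1 - σ) - 1) * ENNReal.ofReal (f x) ^ p := by
  have hnonneg : ∀ᵐ x ∂volume.restrict (Ioi (0 : ℝ)), 0 ≤ x ^ (p * (1 - σ) - 1) * f x ^ p := by
    filter_upwards [ae_restrict_mem measurableSet_Ioi] with x hx
    exact mul_nonneg (Real.rpow_nonneg (mem_Ioi.1 hx).le _) (Real.rpow_nonneg (h.fun_nonneg x) _)
  rw [weightedIntegral, ofReal_integral_eq_lintegral_ofReal h.integrableOn hnonneg]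
  exact setLIntegral_congr_fun measurableSet_Ioi fun x hx ↦
    (ofReal_rpow_mul_ofReal_rpow (mem_Ioi.1 hx) (h.fun_nonneg x) hp _).symm

lemma ofReal_weightedSum (h : IsAdmissible σ p q f a) (hq : 0 ≤ q) :
    ENNReal.ofReal (weightedSum σ q a) = ∑' n : ℕ,
      ENNReal.ofReal (n + 1) ^ (q * (1 - σ) - 1) * ENNReal.ofReal (a (n + 1)) ^ q := by
  rw [weightedSum, ENNReal.ofReal_tsum_of_nonneg (fun n ↦ mul_nonneg (by positivity)
    (Real.rpow_nonneg (h.seq_nonneg _) _)) h.summable]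
  exact tsum_congr fun n ↦
    (ofReal_rpow_mul_ofReal_rpow n.cast_add_one_pos (h.seq_nonneg _) hq _).symm

lemma aemeasurable (h : IsAdmissible σ p q f a) (hp : p ≠ 0) :
    AEMeasurable f (volume.restrict (Ioi 0)) := by
  have hmul : AEMeasurable (fun x ↦ (x ^ (-(p * (1 - σ) - 1)) *
      (x ^ (p * (1 - σ) - 1) * f x ^ p)) ^ p⁻¹) (volume.restrict (Ioi (0 : ℝ))) :=
    (AEMeasurable.mul (by fun_prop) h.integrableOn.aemeasurable).pow_const _
  refine hmul.congr ?_
  filter_upwards [ae_restrict_mem measurableSet_Ioi] with x hx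
  rw [← mul_assoc, ← Real.rpow_add hx, neg_add_cancel, Real.rpow_zero, one_mul,
    Real.rpow_rpow_inv (h.fun_nonneg x) hp]

end IsAdmissible

namespace IsHilbertKernel

lemma strictAntiOn_ofReal (hH : IsHilbertKernel H σ) :
    StrictAntiOn (fun u ↦ ENNReal.ofReal u ^ (σ - 1) * ENNReal.ofReal (H u)) (Ioi 0) := by
  intro u hu v hv huv
  have hv₀ : 0 ≤ v ^ (σ - 1) * H v :=
    mul_nonneg (Real.rpow_nonneg (mem_Ioi.1 hv).le _) (hH.nonneg v hv)
  simp only [ofReal_rpow_mul_ofReal (mem_Ioi.1 hu), ofReal_rpow_mul_ofReal (mem_Ioi.1 hv)]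
  exact (ENNReal.ofReal_lt_ofReal_iff_of_nonneg hv₀).2 (hH.strictAntiOn hu hv huv)

lemma lmellin_ofReal (hH : IsHilbertKernel H σ) :
    lmellin (fun u ↦ ENNReal.ofReal (H u)) σ =
      ENNReal.ofReal (∫ u in Ioi (0 : ℝ), u ^ (σ - 1) * H u) := by
  have hnonneg : ∀ᵐ u ∂volume.restrict (Ioi (0 : ℝ)), 0 ≤ u ^ (σ - 1) * H u := by
    filter_upwards [ae_restrict_mem measurableSet_Ioi] with u hu
    exact mul_nonneg (Real.rpow_nonneg (mem_Ioi.1 hu).le _) (hH.nonneg u hu)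
  rw [lmellin, ofReal_integral_eq_lintegral_ofReal hH.integrableOn hnonneg]
  exact setLIntegral_congr_fun measurableSet_Ioi fun u hu ↦
    ofReal_rpow_mul_ofReal (mem_Ioi.1 hu) _ _

lemma aemeasurable_comp_mul_right (hH : IsHilbertKernel H σ) {c : ℝ} (hc : 0 < c) :
    AEMeasurable (fun x ↦ H (x * c)) (volume.restrict (Ioi 0)) := by
  refine (aemeasurable_comp_mul_left hH.strictAntiOn_ofReal hc).ennreal_toReal.congr ?_
  filter_upwards [ae_restrict_mem measurableSet_Ioi] with x hx
  rw [mul_comm, ENNReal.toReal_ofReal (hH.nonneg _ (mul_pos hx hc))]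

lemma halfDiscreteForm_ofReal_lt (hH : IsHilbertKernel H σ) (hpq : p.HolderConjugate q)
    (h : IsAdmissible σ p q f a) :
    halfDiscreteForm (fun u ↦ ENNReal.ofReal (H u)) (fun x ↦ ENNReal.ofReal (f x))
        (fun n ↦ ENNReal.ofReal (a (n + 1))) <
      ENNReal.ofReal ((∫ u in Ioi (0 : ℝ), u ^ (σ - 1) * H u) *
        (weightedIntegral σ p f ^ (1 / p) * weightedSum σ q a ^ (1 / q))) := by
  have hp := hpq.pos
  have hq := hpq.symm.pos
  have hk : 0 ≤ ∫ u in Ioi (0 : ℝ), u ^ (σ - 1) * H u :=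
    setIntegral_nonneg measurableSet_Ioi fun u hu ↦
      mul_nonneg (Real.rpow_nonneg (mem_Ioi.1 hu).le _) (hH.nonneg u hu)
  have hI := h.weightedIntegral_pos
  have hS := h.weightedSum_pos
  have hlt := halfDiscreteForm_lt hpq hH.strictAntiOn_ofReal
    (hH.lmellin_ofReal.trans_ne ENNReal.ofReal_ne_top) (h.aemeasurable hp.ne').ennreal_ofReal
    (a := fun n ↦ ENNReal.ofReal (a (n + 1)))
    (by simpa [← h.ofReal_weightedIntegral hp.le]) (by simp [← h.ofReal_weightedIntegral hp.le])
    (by simpa [← h.ofReal_weightedSum hq.le]) (by simp [← h.ofReal_weightedSum hq.le])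
  rwa [hH.lmellin_ofReal, ← h.ofReal_weightedIntegral hp.le, ← h.ofReal_weightedSum hq.le,
    ENNReal.ofReal_rpow_of_pos hI, ENNReal.ofReal_rpow_of_pos hS,
    ← ENNReal.ofReal_mul (by positivity), ← ENNReal.ofReal_mul hk] at hlt

lemma ofReal_halfDiscreteSum (hH : IsHilbertKernel H σ) (hpq : p.HolderConjugate q)
    (h : IsAdmissible σ p q f a) :
    ENNReal.ofReal (halfDiscreteSum H f a) =
      halfDiscreteForm (fun u ↦ ENNReal.ofReal (H u)) (fun x ↦ ENNReal.ofReal (f x))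
        (fun n ↦ ENNReal.ofReal (a (n + 1))) := by
  have hfin := (hH.halfDiscreteForm_ofReal_lt hpq h).ne_top
  have hint (n : ℕ) : ∫ x in Ioi (0 : ℝ), H (x * ((n : ℝ) + 1)) * (a (n + 1) * f x) =
      (∫⁻ x in Ioi (0 : ℝ), ENNReal.ofReal (H (x * (n + 1))) *
        (ENNReal.ofReal (a (n + 1)) * ENNReal.ofReal (f x))).toReal := by
    have hHn {x : ℝ} (hx : 0 < x) : 0 ≤ H (x * (n + 1)) := hH.nonneg _ (by positivity)
    rw [integral_eq_lintegral_of_nonneg_ae]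
    · congr 1
      refine setLIntegral_congr_fun measurableSet_Ioi fun x hx ↦ ?_
      rw [ENNReal.ofReal_mul (hHn hx), ENNReal.ofReal_mul (h.seq_nonneg _)]
    · filter_upwards [ae_restrict_mem measurableSet_Ioi] with x hx
      exact mul_nonneg (hHn hx) (mul_nonneg (h.seq_nonneg _) (h.fun_nonneg x))
    · exact ((hH.aemeasurable_comp_mul_right n.cast_add_one_pos).mul
        ((h.aemeasurable hpq.ne_zero).const_mul _)).aestronglyMeasurable
  rw [← ENNReal.ofReal_toReal hfin, halfDiscreteForm,
    ENNReal.tsum_toReal_eq (ENNReal.ne_top_of_tsum_ne_top hfin), halfDiscreteSum]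
  simp only [hint]

theorem isHalfDiscreteHilbertBound (hH : IsHilbertKernel H σ) (hpq : p.HolderConjugate q) :
    IsHalfDiscreteHilbertBound H σ p q (∫ u in Ioi (0 : ℝ), u ^ (σ - 1) * H u) := by
  intro f a h
  have hlt := hH.halfDiscreteForm_ofReal_lt hpq h
  rw [← hH.ofReal_halfDiscreteSum hpq h] at hlt
  exact (ENNReal.ofReal_lt_ofReal_iff').1 hlt |>.1

end IsHilbertKernel

end HilbertBound

section TestFunctions

/-- The near-extremal function `x^(σ-1) (ε x)^(ε/p)` on `(0, 1/ε]`, extended by `0`. As `ε → 0⁺` it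
tends to `x^(σ-1)`, for which the weighted Hölder inequality would be an equality; the factor
`ε^(ε/p)` normalizes its weighted `p`-th moment to be exactly `1/ε`. -/
noncomputable def hilbertTestFun (σ p ε x : ℝ) : ℝ :=
  (Ioc 0 ε⁻¹).indicator (fun x ↦ x ^ (σ - 1) * (ε * x) ^ (ε / p)) x

/-- The near-extremal sequence `n^(σ-1-ε/q)` paired with `hilbertTestFun`. -/
noncomputable def hilbertTestSeq (σ q ε : ℝ) (n : ℕ) : ℝ := (n : ℝ) ^ (σ - 1 - ε / q)

variable {σ p q ε : ℝ}

lemma hilbertTestFun_nonneg (σ p : ℝ) (hε : 0 < ε) (x : ℝ) : 0 ≤ hilbertTestFun σ p ε x :=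
  indicator_nonneg (fun y hy ↦ by have := hy.1; positivity) x

lemma measurable_hilbertTestFun (σ p ε : ℝ) : Measurable (hilbertTestFun σ p ε) :=
  Measurable.indicator (by fun_prop) measurableSet_Ioc

lemma rpow_mul_hilbertTestFun_rpow (hp : 0 < p) (hε : 0 < ε) {x : ℝ} (hx : 0 < x) :
    x ^ (p * (1 - σ) - 1) * hilbertTestFun σ p ε x ^ p =
      (Ioc 0 ε⁻¹).indicator (fun x ↦ ε ^ ε * x ^ (ε - 1)) x := by
  by_cases hxε : x ∈ Ioc 0 ε⁻¹
  · rw [hilbertTestFun, indicator_of_mem hxε, indicator_of_mem hxε,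
      Real.mul_rpow (by positivity) (by positivity), ← Real.rpow_mul hx.le,
      ← Real.rpow_mul (by positivity), div_mul_cancel₀ _ hp.ne', Real.mul_rpow hε.le hx.le,
      ← mul_assoc, ← Real.rpow_add hx, mul_left_comm, ← Real.rpow_add hx]
    ring_nf
  · rw [hilbertTestFun, indicator_of_notMem hxε, indicator_of_notMem hxε, Real.zero_rpow hp.ne',
      mul_zero]

lemma integrableOn_rpow_mul_hilbertTestFun_rpow (hp : 0 < p) (hε : 0 < ε) :
    IntegrableOn (fun x ↦ x ^ (p * (1 - σ) - 1) * hilbertTestFun σ p ε x ^ p) (Ioi 0) := by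
  rw [integrableOn_congr_fun (fun x hx ↦ rpow_mul_hilbertTestFun_rpow hp hε (mem_Ioi.1 hx))
    measurableSet_Ioi]
  refine (IntegrableOn.integrable_indicator ?_ measurableSet_Ioc).integrableOn
  rw [← intervalIntegrable_iff_integrableOn_Ioc_of_le (inv_nonneg.2 hε.le)]
  exact (intervalIntegral.intervalIntegrable_rpow' (by linarith)).const_mul _

lemma weightedIntegral_hilbertTestFun (hp : 0 < p) (hε : 0 < ε) :
    weightedIntegral σ p (hilbertTestFun σ p ε) = ε⁻¹ := by
  have hpow : ε ^ ε ≠ 0 := (Real.rpow_pos_of_pos hε ε).ne'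
  rw [weightedIntegral, setIntegral_congr_fun measurableSet_Ioi fun x hx ↦
      rpow_mul_hilbertTestFun_rpow hp hε (mem_Ioi.1 hx),
    setIntegral_indicator measurableSet_Ioc, inter_eq_right.2 Ioc_subset_Ioi_self,
    ← intervalIntegral.integral_of_le (inv_nonneg.2 hε.le), intervalIntegral.integral_const_mul,
    integral_rpow (Or.inl (by linarith)), sub_add_cancel, Real.zero_rpow hε.ne', sub_zero,
    Real.inv_rpow hε.le]
  field_simp

lemma hilbertTestFun_mul_left_le (hε : 0 < ε) {c x : ℝ} (hc : 1 ≤ c) (hx : 0 < x) :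
    hilbertTestFun σ p ε (c * x) ≤ c ^ (σ - 1 + ε / p) * hilbertTestFun σ p ε x := by
  have hc₀ : 0 < c := one_pos.trans_le hc
  by_cases hcx : c * x ∈ Ioc 0 ε⁻¹
  · have hxε : x ∈ Ioc 0 ε⁻¹ := ⟨hx, (le_mul_of_one_le_left hx.le hc).trans hcx.2⟩
    rw [hilbertTestFun, hilbertTestFun, indicator_of_mem hcx, indicator_of_mem hxε,
      mul_left_comm ε, Real.mul_rpow hc₀.le hx.le, Real.mul_rpow hc₀.le (by positivity),
      Real.rpow_add hc₀, mul_mul_mul_comm]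
  · rw [hilbertTestFun, indicator_of_notMem hcx]
    exact mul_nonneg (by positivity) (hilbertTestFun_nonneg σ p hε x)

lemma tendsto_hilbertTestFun (σ p : ℝ) {x : ℝ} (hx : 0 < x) :
    Tendsto (fun ε ↦ hilbertTestFun σ p ε x) (𝓝[>] 0) (𝓝 (x ^ (σ - 1))) := by
  have hexp : Tendsto (fun ε ↦ x ^ (σ - 1) * Real.exp (ε * x * Real.log (ε * x) / (x * p)))
      (𝓝[>] 0) (𝓝 (x ^ (σ - 1))) := by
    have hcont : Continuous fun ε ↦
        x ^ (σ - 1) * Real.exp (ε * x * Real.log (ε * x) / (x * p)) := by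
      have := Real.continuous_mul_log.comp (continuous_mul_const x)
      fun_prop
    simpa using (hcont.tendsto 0).mono_left nhdsWithin_le_nhds
  refine hexp.congr' ?_
  filter_upwards [Ioc_mem_nhdsGT (inv_pos.2 hx)] with ε hε
  have hxε : x ∈ Ioc 0 ε⁻¹ := ⟨hx, (le_inv_comm₀ hε.1 hx).1 hε.2⟩
  rw [hilbertTestFun, indicator_of_mem hxε, Real.rpow_def_of_pos (mul_pos hε.1 hx)]
  congr 2
  field_simp

lemma hilbertTestSeq_nonneg (σ q ε : ℝ) (n : ℕ) : 0 ≤ hilbertTestSeq σ q ε n :=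
  Real.rpow_nonneg n.cast_nonneg _

lemma rpow_mul_hilbertTestSeq_rpow (hq : q ≠ 0) (n : ℕ) :
    ((n : ℝ) + 1) ^ (q * (1 - σ) - 1) * hilbertTestSeq σ q ε (n + 1) ^ q =
      ((n : ℝ) + 1) ^ (-1 - ε) := by
  have hn : 0 < (n : ℝ) + 1 := n.cast_add_one_pos
  rw [hilbertTestSeq, Nat.cast_add_one, ← Real.rpow_mul hn.le, ← Real.rpow_add hn]
  congr 1
  field_simp
  ring

lemma weightedSum_hilbertTestSeq (hq : q ≠ 0) (ε : ℝ) :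
    weightedSum σ q (hilbertTestSeq σ q ε) = ∑' n : ℕ, ((n : ℝ) + 1) ^ (-1 - ε) :=
  tsum_congr fun n ↦ rpow_mul_hilbertTestSeq_rpow hq n

lemma summable_nat_add_one_rpow (hε : 0 < ε) : Summable fun n : ℕ ↦ ((n : ℝ) + 1) ^ (-1 - ε) := by
  simpa using (summable_nat_add_iff 1).2 (Real.summable_nat_rpow.2 (by linarith : -1 - ε < -1))

lemma tsum_nat_add_one_rpow_pos (hε : 0 < ε) : 0 < ∑' n : ℕ, ((n : ℝ) + 1) ^ (-1 - ε) :=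
  (summable_nat_add_one_rpow hε).tsum_pos (fun n ↦ by positivity) 0 (by positivity)

lemma isAdmissible_hilbertTest (hp : 0 < p) (hq : q ≠ 0) (hε : 0 < ε) :
    IsAdmissible σ p q (hilbertTestFun σ p ε) (hilbertTestSeq σ q ε) where
  fun_nonneg := hilbertTestFun_nonneg σ p hε
  seq_nonneg := hilbertTestSeq_nonneg σ q ε
  weightedIntegral_pos := by simpa [weightedIntegral_hilbertTestFun hp hε]
  integrableOn := integrableOn_rpow_mul_hilbertTestFun_rpow hp hε
  weightedSum_pos := by simpa [weightedSum_hilbertTestSeq hq] using tsum_nat_add_one_rpow_pos hε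
  summable := by
    simpa only [rpow_mul_hilbertTestSeq_rpow hq] using summable_nat_add_one_rpow hε

lemma tendsto_mul_tsum_nat_add_one_rpow :
    Tendsto (fun ε : ℝ ↦ ε * ∑' n : ℕ, ((n : ℝ) + 1) ^ (-1 - ε)) (𝓝[>] 0) (𝓝 1) := by
  have hshift : Tendsto (fun ε : ℝ ↦ 1 + ε) (𝓝[>] 0) (𝓝[>] 1) := by
    refine tendsto_nhdsWithin_iff.2
      ⟨?_, eventually_mem_nhdsWithin.mono fun ε hε ↦ by simpa using hε⟩
    simpa using ((continuous_const_add (1 : ℝ)).tendsto 0).mono_left nhdsWithin_le_nhds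
  refine (tendsto_sub_mul_tsum_nat_rpow.comp hshift).congr' ?_
  filter_upwards [self_mem_nhdsWithin] with ε hε
  have hsum : Summable fun n : ℕ ↦ 1 / (n : ℝ) ^ (1 + ε) :=
    Real.summable_one_div_nat_rpow.2 (by simpa using hε)
  have hzero : (0 : ℝ) ^ (1 + ε) = 0 := Real.zero_rpow (by linarith [mem_Ioi.1 hε])
  rw [Function.comp_apply, add_sub_cancel_left, hsum.tsum_eq_zero_add, Nat.cast_zero, hzero,
    div_zero, zero_add]
  congr! 3 with n
  rw [one_div, Nat.cast_add_one, ← Real.rpow_neg n.cast_add_one_pos.le, neg_add']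

lemma tsum_mul_lintegral_hilbertTestFun_le (φ : ℝ → ℝ≥0∞) (hpq : p.HolderConjugate q)
    (hε : 0 < ε) :
    ENNReal.ofReal (∑' n : ℕ, ((n : ℝ) + 1) ^ (-1 - ε)) *
        ∫⁻ x in Ioi (0 : ℝ), φ x * ENNReal.ofReal (hilbertTestFun σ p ε x) ≤
      halfDiscreteForm φ (fun x ↦ ENNReal.ofReal (hilbertTestFun σ p ε x))
        (fun n ↦ ENNReal.ofReal (hilbertTestSeq σ q ε (n + 1))) := by
  rw [halfDiscreteForm, ENNReal.ofReal_tsum_of_nonneg (fun n ↦ by positivity)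
    (summable_nat_add_one_rpow hε), ← ENNReal.tsum_mul_right]
  refine ENNReal.tsum_le_tsum fun n ↦ ?_
  have hn : 0 < (n : ℝ) + 1 := n.cast_add_one_pos
  have hscale {x : ℝ} (hx : 0 < x) :
      ((n : ℝ) + 1) ^ (-1 - ε) * (n + 1) * hilbertTestFun σ p ε ((n + 1) * x) ≤
        hilbertTestSeq σ q ε (n + 1) * hilbertTestFun σ p ε x := by
    have hpow : ((n : ℝ) + 1) ^ (-1 - ε) * (n + 1) * (n + 1) ^ (σ - 1 + ε / p) =
        hilbertTestSeq σ q ε (n + 1) := by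
      rw [hilbertTestSeq, Nat.cast_add_one, ← Real.rpow_add_one hn.ne', ← Real.rpow_add hn]
      congr 1
      linear_combination ε * one_div_add_one_div_eq_one hpq
    rw [← hpow, mul_assoc _ ((n + 1 : ℝ) ^ _)]
    gcongr
    exact hilbertTestFun_mul_left_le hε (by simp) hx
  rw [← ofReal_mul_lintegral_Ioi_comp_mul_left hn, ← mul_assoc,
    ← ENNReal.ofReal_mul (by positivity), ← lintegral_const_mul' _ _ ENNReal.ofReal_ne_top]
  refine setLIntegral_mono' measurableSet_Ioi fun x hx ↦ ?_
  rw [mul_left_comm, mul_comm x, ← ENNReal.ofReal_mul (by positivity),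
    ← ENNReal.ofReal_mul (hilbertTestSeq_nonneg σ q ε (n + 1))]
  exact mul_le_mul_right (ENNReal.ofReal_le_ofReal (hscale hx)) _

lemma lmellin_le_liminf_lintegral_hilbertTestFun {φ : ℝ → ℝ≥0∞}
    (hφ : AEMeasurable φ (volume.restrict (Ioi 0))) (σ p : ℝ) :
    lmellin φ σ ≤ liminf (fun ε ↦ ∫⁻ x in Ioi (0 : ℝ),
      φ x * ENNReal.ofReal (hilbertTestFun σ p ε x)) (𝓝[>] 0) := by
  have hlim : ∀ x ∈ Ioi (0 : ℝ), ENNReal.ofReal x ^ (σ - 1) * φ x =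
      liminf (fun ε ↦ φ x * ENNReal.ofReal (hilbertTestFun σ p ε x)) (𝓝[>] 0) := by
    intro x hx
    rw [mul_comm, ENNReal.ofReal_rpow_of_pos hx]
    refine (Tendsto.liminf_eq (ENNReal.Tendsto.const_mul
      (ENNReal.tendsto_ofReal (tendsto_hilbertTestFun σ p hx)) (Or.inl ?_))).symm
    exact (ENNReal.ofReal_pos.2 (Real.rpow_pos_of_pos hx _)).ne'
  rw [lmellin, setLIntegral_congr_fun measurableSet_Ioi hlim]
  exact lintegral_liminf_le' fun ε ↦
    hφ.mul (measurable_hilbertTestFun σ p ε).ennreal_ofReal.aemeasurable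

end TestFunctions

section BestConstant

variable {H : ℝ → ℝ} {σ p q C : ℝ}

lemma lintegral_hilbertTestFun_le (hH : IsHilbertKernel H σ) (hpq : p.HolderConjugate q)
    (hC : IsHalfDiscreteHilbertBound H σ p q C) {ε : ℝ} (hε : 0 < ε) :
    ∫⁻ x in Ioi (0 : ℝ), ENNReal.ofReal (H x) * ENNReal.ofReal (hilbertTestFun σ p ε x) ≤
      ENNReal.ofReal (C * (ε * ∑' n : ℕ, ((n : ℝ) + 1) ^ (-1 - ε)) ^ (-(1 / p))) := by
  have hadm := isAdmissible_hilbertTest (σ := σ) hpq.pos hpq.symm.ne_zero hε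
  have hle := (tsum_mul_lintegral_hilbertTestFun_le (σ := σ) (fun u ↦ ENNReal.ofReal (H u)) hpq
    hε).trans_eq (hH.ofReal_halfDiscreteSum hpq hadm).symm |>.trans
      (ENNReal.ofReal_le_ofReal (hC _ _ hadm).le)
  rw [weightedIntegral_hilbertTestFun hpq.pos hε, weightedSum_hilbertTestSeq hpq.symm.ne_zero,
    mul_comm] at hle
  have hS := tsum_nat_add_one_rpow_pos hε
  set S := ∑' n : ℕ, ((n : ℝ) + 1) ^ (-1 - ε)
  have hS_pow : S ^ (1 / q) = S * S ^ (-(1 / p)) := by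
    have hexp : 1 / q = -(1 / p) + 1 := by linear_combination one_div_add_one_div_eq_one hpq
    rw [hexp, Real.rpow_add_one hS.ne', mul_comm]
  rw [← ENNReal.le_div_iff_mul_le (by simp [hS]) (by simp), ← ENNReal.ofReal_div_of_pos hS] at hle
  refine hle.trans_eq (congrArg _ ?_)
  rw [hS_pow, Real.mul_rpow hε.le hS.le, Real.inv_rpow hε.le, ← Real.rpow_neg hε.le]
  field_simp

theorem IsHilbertKernel.integral_le (hH : IsHilbertKernel H σ) (hpq : p.HolderConjugate q)
    (hC : IsHalfDiscreteHilbertBound H σ p q C) :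
    ∫ u in Ioi (0 : ℝ), u ^ (σ - 1) * H u ≤ C := by
  have hlim : Tendsto (fun ε : ℝ ↦ ENNReal.ofReal
      (C * (ε * ∑' n : ℕ, ((n : ℝ) + 1) ^ (-1 - ε)) ^ (-(1 / p)))) (𝓝[>] 0)
      (𝓝 (ENNReal.ofReal C)) := by
    refine ENNReal.tendsto_ofReal ?_
    simpa using (tendsto_mul_tsum_nat_add_one_rpow.rpow_const (p := -(1 / p))
      (Or.inl one_ne_zero)).const_mul C
  have hle : ENNReal.ofReal (∫ u in Ioi (0 : ℝ), u ^ (σ - 1) * H u) ≤ ENNReal.ofReal C := by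
    rw [← hH.lmellin_ofReal, ← hlim.liminf_eq]
    refine (lmellin_le_liminf_lintegral_hilbertTestFun ?_ σ p).trans (liminf_le_liminf ?_)
    · simpa using aemeasurable_comp_mul_left hH.strictAntiOn_ofReal one_pos
    · exact eventually_mem_nhdsWithin.mono fun ε hε ↦ lintegral_hilbertTestFun_le hH hpq hC hε
  have hpos : 0 < ENNReal.ofReal (∫ u in Ioi (0 : ℝ), u ^ (σ - 1) * H u) := by
    rw [← hH.lmellin_ofReal, pos_iff_ne_zero]
    exact lmellin_ne_zero hH.strictAntiOn_ofReal (hH.lmellin_ofReal.trans_ne ENNReal.ofReal_ne_top)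
  exact (ENNReal.ofReal_le_ofReal_iff'.1 hle).resolve_right (ENNReal.ofReal_pos.1 hpos).not_ge

theorem IsHilbertKernel.isLeast_isHalfDiscreteHilbertBound (hH : IsHilbertKernel H σ)
    (hpq : p.HolderConjugate q) :
    IsLeast {C | IsHalfDiscreteHilbertBound H σ p q C} (∫ u in Ioi (0 : ℝ), u ^ (σ - 1) * H u) :=
  ⟨hH.isHalfDiscreteHilbertBound hpq, fun _ hC ↦ hH.integral_le hpq hC⟩

end BestConstant

section CschKernel

variable {α ρ γ σ : ℝ}

lemma hasSum_csch_div_exp (α : ℝ) (hρ : 0 < ρ) {t : ℝ} (ht : 0 < t) :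
    HasSum (fun k : ℕ ↦ 2 * Real.exp (-(2 * ρ * (k + (α + ρ) / (2 * ρ))) * t))
      (csch (ρ * t) / Real.exp (α * t)) := by
  have hlt : Real.exp (-(2 * ρ * t)) < 1 := Real.exp_lt_one_iff.2 (neg_lt_zero.2 (by positivity))
  have hterm (k : ℕ) : 2 * Real.exp (-(2 * ρ * (k + (α + ρ) / (2 * ρ))) * t) =
      2 * Real.exp (-((α + ρ) * t)) * Real.exp (-(2 * ρ * t)) ^ k := by
    rw [← Real.exp_nat_mul, mul_assoc 2 (Real.exp _), ← Real.exp_add]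
    congr 2
    field_simp
    ring
  have hvalue : csch (ρ * t) / Real.exp (α * t) =
      2 * Real.exp (-((α + ρ) * t)) * (1 - Real.exp (-(2 * ρ * t)))⁻¹ := by
    have hfactor : Real.exp (ρ * t) - Real.exp (-(ρ * t)) =
        Real.exp (ρ * t) * (1 - Real.exp (-(2 * ρ * t))) := by
      rw [mul_sub, mul_one, ← Real.exp_add]
      ring_nf
    have hsplit : Real.exp (-((α + ρ) * t)) = (Real.exp (ρ * t) * Real.exp (α * t))⁻¹ := by
      rw [← Real.exp_add, ← Real.exp_neg]
      ring_nf
    rw [csch, hfactor, hsplit]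
    field_simp
  simp only [hterm, hvalue]
  exact (hasSum_geometric_of_lt_one (Real.exp_pos _).le hlt).mul_left _

lemma csch_div_exp_pos (α : ℝ) (hρ : 0 < ρ) {t : ℝ} (ht : 0 < t) :
    0 < csch (ρ * t) / Real.exp (α * t) := by
  have hsum := hasSum_csch_div_exp α hρ ht
  rw [← hsum.tsum_eq]
  exact hsum.summable.tsum_pos (fun k ↦ by positivity) 0 (by positivity)

lemma strictAntiOn_csch_div_exp (hρ : 0 < ρ) (hα : 0 < α + ρ) :
    StrictAntiOn (fun t ↦ csch (ρ * t) / Real.exp (α * t)) (Ioi 0) := by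
  intro s hs t ht hst
  have hterm (k : ℕ) : 2 * Real.exp (-(2 * ρ * (k + (α + ρ) / (2 * ρ))) * t) <
      2 * Real.exp (-(2 * ρ * (k + (α + ρ) / (2 * ρ))) * s) := by
    have hrate : 0 < 2 * ρ * (k + (α + ρ) / (2 * ρ)) := by positivity
    simpa using mul_lt_mul_of_pos_left hst hrate
  exact hasSum_lt (fun k ↦ (hterm k).le) (hterm 0) (hasSum_csch_div_exp α hρ ht)
    (hasSum_csch_div_exp α hρ hs)

lemma strictAntiOn_rpow_mul_csch_div_exp (hρ : 0 < ρ) (hα : 0 < α + ρ) (hγ : 0 < γ) (hσ : σ ≤ 1) :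
    StrictAntiOn (fun u ↦ u ^ (σ - 1) * (csch (ρ * u ^ γ) / Real.exp (α * u ^ γ))) (Ioi 0) := by
  intro u hu v hv huv
  have huγ : 0 < u ^ γ := Real.rpow_pos_of_pos hu γ
  have hvγ : 0 < v ^ γ := Real.rpow_pos_of_pos hv γ
  exact mul_lt_mul' (Real.rpow_le_rpow_of_nonpos hu huv.le (by linarith))
    (strictAntiOn_csch_div_exp hρ hα huγ hvγ (Real.rpow_lt_rpow (mem_Ioi.1 hu).le huv hγ))
    (csch_div_exp_pos α hρ hvγ).le (Real.rpow_pos_of_pos hu _)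

lemma hasSum_hurwitzZetaReal {s a : ℝ} (hs : 1 < s) (ha : 0 < a) :
    HasSum (fun k : ℕ ↦ ((k : ℝ) + a) ^ (-s)) (hurwitzZetaReal s a) := by
  refine (((Real.summable_one_div_nat_add_rpow a s).2 hs).congr fun k ↦ ?_).hasSum
  rw [abs_of_pos (by positivity), Real.rpow_neg (by positivity), one_div]

lemma integral_rpow_mul_two_mul_exp (hγ : 0 < γ) (hσ : 0 < σ) {ρ b : ℝ} (hρ : 0 < ρ) (hb : 0 < b) :
    ∫ u in Ioi (0 : ℝ), u ^ (σ - 1) * (2 * Real.exp (-(2 * ρ * b) * u ^ γ)) =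
      2 * Real.Gamma (σ / γ) / (γ * (2 * ρ) ^ (σ / γ)) * b ^ (-(σ / γ)) := by
  simp only [mul_left_comm _ (2 : ℝ)]
  rw [integral_const_mul, integral_rpow_mul_exp_neg_mul_rpow hγ (by linarith) (by positivity),
    sub_add_cancel, neg_div, Real.mul_rpow (by positivity) hb.le,
    Real.rpow_neg (by positivity : 0 ≤ 2 * ρ)]
  field_simp

lemma hasSum_integral_csch_div_exp (hρ : 0 < ρ) (hα : 0 < α + ρ) (hγ : 0 < γ) (hγσ : γ < σ) :
    HasSum (fun k : ℕ ↦ 2 * Real.Gamma (σ / γ) / (γ * (2 * ρ) ^ (σ / γ)) *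
        (k + (α + ρ) / (2 * ρ)) ^ (-(σ / γ)))
      (∫ u in Ioi (0 : ℝ), u ^ (σ - 1) * (csch (ρ * u ^ γ) / Real.exp (α * u ^ γ))) := by
  have hσ : 0 < σ := hγ.trans hγσ
  have hrate (k : ℕ) : 0 < k + (α + ρ) / (2 * ρ) := by positivity
  let F : ℕ → ℝ → ℝ := fun k u ↦
    u ^ (σ - 1) * (2 * Real.exp (-(2 * ρ * (k + (α + ρ) / (2 * ρ))) * u ^ γ))
  have hF_int (k : ℕ) : IntegrableOn (F k) (Ioi 0) := by
    simp only [F, mul_left_comm _ (2 : ℝ)]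
    exact (integrableOn_rpow_mul_exp_neg_mul_rpow (by linarith) hγ
      (mul_pos (by positivity) (hrate k))).const_mul 2
  have hF_norm (k : ℕ) : ∫ u in Ioi (0 : ℝ), ‖F k u‖ = ∫ u in Ioi (0 : ℝ), F k u :=
    setIntegral_congr_fun measurableSet_Ioi fun u hu ↦ Real.norm_of_nonneg
      (mul_nonneg (Real.rpow_nonneg (mem_Ioi.1 hu).le _) (by positivity))
  have hF_value (k : ℕ) := integral_rpow_mul_two_mul_exp hγ hσ hρ (hrate k)
  have hsummable : Summable fun k ↦ ∫ u in Ioi (0 : ℝ), ‖F k u‖ := by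
    simp only [hF_norm, F, hF_value]
    exact (hasSum_hurwitzZetaReal ((one_lt_div hγ).2 hγσ) (by positivity)).summable.mul_left _
  have hseries : ∫ u in Ioi (0 : ℝ), u ^ (σ - 1) * (csch (ρ * u ^ γ) / Real.exp (α * u ^ γ)) =
      ∫ u in Ioi (0 : ℝ), ∑' k, F k u :=
    setIntegral_congr_fun measurableSet_Ioi fun u hu ↦
      ((hasSum_csch_div_exp α hρ (Real.rpow_pos_of_pos (mem_Ioi.1 hu) γ)).mul_left _).tsum_eq.symm
  rw [hseries]
  simpa only [F, hF_value] using hasSum_integral_of_summable_integral_norm hF_int hsummable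

lemma integral_rpow_mul_csch_div_exp (hρ : 0 < ρ) (hα : 0 < α + ρ) (hγ : 0 < γ) (hγσ : γ < σ) :
    ∫ u in Ioi (0 : ℝ), u ^ (σ - 1) * (csch (ρ * u ^ γ) / Real.exp (α * u ^ γ)) =
      2 * Real.Gamma (σ / γ) / (γ * (2 * ρ) ^ (σ / γ)) *
        hurwitzZetaReal (σ / γ) ((α + ρ) / (2 * ρ)) :=
  (hasSum_integral_csch_div_exp hρ hα hγ hγσ).unique
    ((hasSum_hurwitzZetaReal ((one_lt_div hγ).2 hγσ) (by positivity)).mul_left _)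

lemma isHilbertKernel_csch_div_exp (hρ : 0 < ρ) (hα : 0 < α + ρ) (hγ : 0 < γ) (hγσ : γ < σ)
    (hσ : σ ≤ 1) : IsHilbertKernel (fun u ↦ csch (ρ * u ^ γ) / Real.exp (α * u ^ γ)) σ where
  nonneg u hu := (csch_div_exp_pos α hρ (Real.rpow_pos_of_pos hu γ)).le
  strictAntiOn := strictAntiOn_rpow_mul_csch_div_exp hρ hα hγ hσ
  integrableOn := by
    have hGamma : 0 < Real.Gamma (σ / γ) := Real.Gamma_pos_of_pos (div_pos (hγ.trans hγσ) hγ)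
    have hsum := hasSum_integral_csch_div_exp hρ hα hγ hγσ
    refine Integrable.of_integral_ne_zero (hsum.tsum_eq.symm.trans_ne ?_)
    exact (hsum.summable.tsum_pos (fun k ↦ by positivity) 0 (by positivity)).ne'

end CschKernel

theorem stmt17 (α ρ γ σ p q : ℝ)
    (hp : 1 < p) (hpq : 1 / p + 1 / q = 1)
    (hρ : ρ > max 0 (-α)) (hγ : 0 < γ) (hγσ : γ < σ) (hσ : σ ≤ 1)
    (k : ℝ)
    (hk : k = 2 * Real.Gamma (σ / γ) / (γ * (2 * ρ) ^ (σ / γ)) *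
        hurwitzZetaReal (σ / γ) ((α + ρ) / (2 * ρ))) :
    (∀ (f : ℝ → ℝ) (a : ℕ → ℝ), (∀ x, 0 ≤ f x) → (∀ n, 0 ≤ a n) →
      (0 < ∫ x in Set.Ioi (0 : ℝ), x ^ (p * (1 - σ) - 1) * f x ^ p) →
      MeasureTheory.IntegrableOn (fun x => x ^ (p * (1 - σ) - 1) * f x ^ p) (Set.Ioi 0) →
      (0 < ∑' n : ℕ, ((n : ℝ) + 1) ^ (q * (1 - σ) - 1) * a (n + 1) ^ q) →
      (Summable fun n : ℕ => ((n : ℝ) + 1) ^ (q * (1 - σ) - 1) * a (n + 1) ^ q) →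
      (∑' n : ℕ, ∫ x in Set.Ioi (0 : ℝ),
          csch (ρ * (x * ((n : ℝ) + 1)) ^ γ) / Real.exp (α * (x * ((n : ℝ) + 1)) ^ γ) *
            (a (n + 1) * f x)) <
        k * ((∫ x in Set.Ioi (0 : ℝ), x ^ (p * (1 - σ) - 1) * f x ^ p) ^ (1 / p) *
          (∑' n : ℕ, ((n : ℝ) + 1) ^ (q * (1 - σ) - 1) * a (n + 1) ^ q) ^ (1 / q))) ∧
    (∀ K : ℝ, 0 < K →
      (∀ (f : ℝ → ℝ) (a : ℕ → ℝ), (∀ x, 0 ≤ f x) → (∀ n, 0 ≤ a n) →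
        (0 < ∫ x in Set.Ioi (0 : ℝ), x ^ (p * (1 - σ) - 1) * f x ^ p) →
        MeasureTheory.IntegrableOn (fun x => x ^ (p * (1 - σ) - 1) * f x ^ p) (Set.Ioi 0) →
        (0 < ∑' n : ℕ, ((n : ℝ) + 1) ^ (q * (1 - σ) - 1) * a (n + 1) ^ q) →
        (Summable fun n : ℕ => ((n : ℝ) + 1) ^ (q * (1 - σ) - 1) * a (n + 1) ^ q) →
        (∑' n : ℕ, ∫ x in Set.Ioi (0 : ℝ),
            csch (ρ * (x * ((n : ℝ) + 1)) ^ γ) / Real.exp (α * (x * ((n : ℝ) + 1)) ^ γ) *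
              (a (n + 1) * f x)) <
          K * ((∫ x in Set.Ioi (0 : ℝ), x ^ (p * (1 - σ) - 1) * f x ^ p) ^ (1 / p) *
            (∑' n : ℕ, ((n : ℝ) + 1) ^ (q * (1 - σ) - 1) * a (n + 1) ^ q) ^ (1 / q))) →
      k ≤ K) := by
  have hρ₀ : 0 < ρ := (le_max_left _ _).trans_lt hρ
  have hα : 0 < α + ρ := by linarith [(le_max_right 0 (-α)).trans_lt hρ]
  have hpq' : p.HolderConjugate q :=
    Real.holderConjugate_iff.2 ⟨hp, by simpa only [one_div] using hpq⟩
  have hleast := (isHilbertKernel_csch_div_exp hρ₀ hα hγ hγσ hσ).isLeast_isHalfDiscreteHilbertBound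
    hpq'
  rw [integral_rpow_mul_csch_div_exp hρ₀ hα hγ hγσ, ← hk] at hleast
  exact ⟨fun f a hf ha hI hI_int hS hS_sum ↦ hleast.1 f a ⟨hf, ha, hI, hI_int, hS, hS_sum⟩,
    fun K _ hK ↦ hleast.2 fun f a h ↦ hK f a h.fun_nonneg h.seq_nonneg h.weightedIntegral_pos
      h.integrableOn h.weightedSum_pos h.summable⟩
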